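/- Let b ≥ 2 be an integer and E a nonempty set of base-b digits. Then K(b,E) = (b/#E)·log(b) − Σ_{m=1}^∞ ζ(m+1)·(Σ_{d∈F} v_m(d))/b^{m+1}, where the series on the right converges. -/

import Mathlib

open MeasureTheory Real ENNReal

/-- The digamma function `ψ(x) = d/dx log Γ(x)`. -/
noncomputable def digamma (x : ℝ) : ℝ := deriv (fun y => Real.log (Real.Gamma y)) x

/-- The Kempner sum `K(b,E)`: sum of reciprocals of positive integers whose
base-`b` digits all avoid the excluded set `E`. -/
noncomputable def kempnerSum (b : ℕ) (E : Finset ℕ) : ℝ :=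
  ∑' n : ℕ, if n ≠ 0 ∧ ∀ d ∈ Nat.digits b n, d ∉ E then (n : ℝ)⁻¹ else 0

/-- The measure `μ_{b,E}` on `[0,1)`: the sum, over all finite strings of admissible
digits (digits `< b` not in `E`), of the weighted Dirac mass `b^{-l} δ_{n(X)/b^l}`. -/
noncomputable def kempnerMeasure (b : ℕ) (E : Finset ℕ) : Measure ℝ :=
  Measure.sum (fun X : {l : List ℕ // ∀ d ∈ l, d < b ∧ d ∉ E} =>
    ((b : ℝ≥0∞) ^ X.1.length)⁻¹ •
      Measure.dirac (((Nat.ofDigits b X.1 : ℕ) : ℝ) / (b : ℝ) ^ X.1.length))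

/-- `E₁ = E` if `0 ∉ E`, and `E₁ = (E ∪ {b}) \ {0}` if `0 ∈ E`. -/
def Eone (b : ℕ) (E : Finset ℕ) : Finset ℕ :=
  if 0 ∈ E then insert b (E.erase 0) else E

/-- `ζ(s) = ∑_{k ≥ 1} k⁻ˢ`. -/
noncomputable def zetaVal (s : ℕ) : ℝ := ∑' k : ℕ, (((k : ℝ) + 1) ^ s)⁻¹

/-- `v_m(d) = ∫_{[0,1)} (d - x)^m dμ_{b,E}(x)`. -/
noncomputable def vMoment (b : ℕ) (E : Finset ℕ) (m : ℕ) (d : ℝ) : ℝ :=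
  ∫ x in Set.Ico (0 : ℝ) 1, (d - x) ^ m ∂(kempnerMeasure b E)

/-- Admissible digits. -/
def kA (b : ℕ) (E : Finset ℕ) : Finset ℕ := (Finset.range b).filter (fun d => d ∉ E)

/-- Weight of a string. -/
noncomputable def kw (b : ℕ) (E : Finset ℕ) (L : List (kA b E)) : ℝ := ((b : ℝ) ^ L.length)⁻¹

/-- Position of a string. -/
noncomputable def kp (b : ℕ) (E : Finset ℕ) (L : List (kA b E)) : ℝ :=
  ((Nat.ofDigits b (L.map Subtype.val) : ℕ) : ℝ) / (b : ℝ) ^ L.length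

/-- `U(y) = ∫ 1/(y+x)`. -/
noncomputable def kU (b : ℕ) (E : Finset ℕ) (y : ℝ) : ℝ :=
  ∑' L : List (kA b E), kw b E L / (y + kp b E L)

lemma kA_card (b : ℕ) (E : Finset ℕ) (hEsub : ∀ d ∈ E, d < b) :
    ((kA b E).card : ℝ) = b - E.card := by
  have h : kA b E = Finset.range b \ E := by
    ext x; simp [kA]
  have hs : E ⊆ Finset.range b := fun x hx => by simpa using hEsub x hx
  rw [h, Finset.card_sdiff_of_subset hs, Nat.cast_sub (Finset.card_le_card hs)]
  simp

lemma kw_hasSum (b : ℕ) (hb : 2 ≤ b) (E : Finset ℕ)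
    (hE : E.Nonempty) (hEsub : ∀ d ∈ E, d < b) :
    HasSum (kw b E) ((b : ℝ) / E.card) := by
  have hc := kA_card b E hEsub
  have hpos : (0 : ℝ) < E.card := by exact_mod_cast hE.card_pos
  have hbpos : (0 : ℝ) < b := by exact_mod_cast (by omega : 0 < b)
  have hfib : ∀ n : ℕ, HasSum (fun f : Fin n → kA b E => ((b : ℝ) ^ n)⁻¹)
      ((((kA b E).card : ℝ) / b) ^ n) := by
    intro n
    have := hasSum_fintype (fun f : Fin n → kA b E => ((b : ℝ) ^ n)⁻¹)
    convert this using 1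
    simp [div_eq_mul_inv, mul_pow]
  have hgeo : HasSum (fun n : ℕ => (((kA b E).card : ℝ) / b) ^ n) ((b : ℝ) / E.card) := by
    have h1 := hasSum_geometric_of_lt_one (r := ((kA b E).card : ℝ) / b) (by positivity)
      (by rw [div_lt_one hbpos]; linarith)
    convert h1 using 1
    have h3 : (1 : ℝ) - ((b : ℝ) - E.card) / b = E.card / b := by field_simp; ring
    rw [hc, h3, inv_div]
  have hs : HasSum (fun q : (Σ n, Fin n → kA b E) => ((b : ℝ) ^ q.1)⁻¹) ((b : ℝ) / E.card) := by
    have hsum : Summable (fun q : (Σ n, Fin n → kA b E) => ((b : ℝ) ^ q.1)⁻¹) := by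
      rw [summable_sigma_of_nonneg (fun q => by positivity)]
      refine ⟨fun n => (hfib n).summable, ?_⟩
      have := hgeo.summable
      convert this using 2 with n
      exact (hfib n).tsum_eq
    have h2 := hsum.hasSum.sigma hfib
    have h3 := h2.unique hgeo
    rw [← h3]; exact hsum.hasSum
  rw [← List.equivSigmaTuple.hasSum_iff] at hs
  exact hs

lemma kw_pos (b : ℕ) (hb : 2 ≤ b) (E : Finset ℕ) (L : List (kA b E)) : 0 < kw b E L := by
  have hbpos : (0 : ℝ) < b := by exact_mod_cast (by omega : 0 < b)
  unfold kw; positivity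

lemma kp_nonneg (b : ℕ) (E : Finset ℕ) (L : List (kA b E)) : 0 ≤ kp b E L := by
  unfold kp; positivity

lemma kp_lt_one (b : ℕ) (hb : 2 ≤ b) (E : Finset ℕ) (L : List (kA b E)) : kp b E L < 1 := by
  have hbpos : (0 : ℝ) < b := by exact_mod_cast (by omega : 0 < b)
  unfold kp
  rw [div_lt_one (by positivity)]
  have : Nat.ofDigits b (L.map Subtype.val) < b ^ (L.map Subtype.val).length := by
    apply Nat.ofDigits_lt_base_pow_length (by omega)
    intro x hx
    simp only [List.mem_map] at hx
    obtain ⟨a, _, rfl⟩ := hx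
    have := a.2
    simp [kA] at this
    exact this.1
  simp only [List.length_map] at this
  exact_mod_cast this

/-- Lists over the subtype vs subtype of lists. -/
noncomputable def kEquiv (b : ℕ) (E : Finset ℕ) :
    List (kA b E) ≃ {l : List ℕ // ∀ d ∈ l, d < b ∧ d ∉ E} :=
  Equiv.ofBijective (fun L => ⟨L.map Subtype.val, by
    intro d hd
    simp only [List.mem_map] at hd
    obtain ⟨a, _, rfl⟩ := hd
    have := a.2
    simpa [kA] using this⟩) (by
    constructor
    · intro L L' h
      simp only [Subtype.mk.injEq] at h
      exact (List.map_injective_iff.2 Subtype.val_injective) h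
    · rintro ⟨l, hl⟩
      refine ⟨l.attach.map (fun x => ⟨x.1, by simpa [kA] using hl x.1 x.2⟩), ?_⟩
      simp)

lemma kEquiv_val (b : ℕ) (E : Finset ℕ) (L : List (kA b E)) :
    (kEquiv b E L).1 = L.map Subtype.val := rfl

lemma vMoment_hasSum (b : ℕ) (hb : 2 ≤ b) (E : Finset ℕ)
    (hE : E.Nonempty) (hEsub : ∀ d ∈ E, d < b) (m d : ℕ) :
    HasSum (fun L => kw b E L * ((d : ℝ) - kp b E L) ^ m) (vMoment b E m d) := by
  have hbpos : (0 : ℝ) < b := by exact_mod_cast (by omega : 0 < b)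
  have hw := kw_hasSum b hb E hE hEsub
  have habs : ∀ L, ‖kw b E L * ((d : ℝ) - kp b E L) ^ m‖ ≤ kw b E L * ((d : ℝ) + 1) ^ m := by
    intro L
    rw [norm_mul, Real.norm_of_nonneg (kw_pos b hb E L).le, norm_pow]
    have h0 := kp_nonneg b E L
    have h1 := kp_lt_one b hb E L
    have h2 := (kw_pos b hb E L).le
    have h3 : ‖(d : ℝ) - kp b E L‖ ≤ d + 1 := by
      rw [Real.norm_eq_abs, abs_le]
      have : (0 : ℝ) ≤ d := by positivity
      constructor <;> linarith
    gcongr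
  have hsum : Summable (fun L => kw b E L * ((d : ℝ) - kp b E L) ^ m) :=
    Summable.of_norm_bounded (hw.summable.mul_right _) habs
  set f : ℝ → ℝ := (Set.Ico (0 : ℝ) 1).indicator (fun x => ((d : ℝ) - x) ^ m) with hf
  have hfp : ∀ L, f (kp b E L) = ((d : ℝ) - kp b E L) ^ m := by
    intro L
    rw [hf, Set.indicator_of_mem]
    exact ⟨kp_nonneg b E L, kp_lt_one b hb E L⟩
  have hw' : ∀ L, (((b : ℝ≥0∞) ^ (kEquiv b E L).1.length)⁻¹).toReal = kw b E L := by
    intro L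
    simp [kEquiv_val, kw]
  have hp' : ∀ L, (((Nat.ofDigits b (kEquiv b E L).1 : ℕ) : ℝ) /
      (b : ℝ) ^ (kEquiv b E L).1.length) = kp b E L := by
    intro L
    simp [kEquiv_val, kp]
  have hv : vMoment b E m d = ∑' L, kw b E L * ((d : ℝ) - kp b E L) ^ m := by
    unfold vMoment
    rw [← integral_indicator measurableSet_Ico]
    change ∫ x, f x ∂(kempnerMeasure b E) = _
    unfold kempnerMeasure
    rw [integral_sum_dirac_eq_tsum]
    · rw [← (kEquiv b E).tsum_eq]
      apply tsum_congr
      intro L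
      rw [hw', hp', hfp, smul_eq_mul]
    · intro i
      simp; omega
    · rw [← (kEquiv b E).summable_iff]
      refine hsum.norm.congr ?_
      intro L
      simp only [Function.comp]
      rw [hw', hp', hfp, norm_mul, Real.norm_of_nonneg (kw_pos b hb E L).le]
  rw [hv]
  exact hsum.hasSum

lemma kU_summable (b : ℕ) (hb : 2 ≤ b) (E : Finset ℕ)
    (hE : E.Nonempty) (hEsub : ∀ d ∈ E, d < b) (y : ℝ) (hy : 0 < y) :
    Summable (fun L => kw b E L / (y + kp b E L)) := by
  have hw := (kw_hasSum b hb E hE hEsub).summable.mul_right y⁻¹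
  refine Summable.of_nonneg_of_le (fun L => ?_) (fun L => ?_) hw
  · have := (kw_pos b hb E L).le
    have := kp_nonneg b E L
    positivity
  · rw [div_eq_mul_inv]
    have := (kw_pos b hb E L).le
    have := kp_nonneg b E L
    gcongr
    linarith

lemma kU_le (b : ℕ) (hb : 2 ≤ b) (E : Finset ℕ)
    (hE : E.Nonempty) (hEsub : ∀ d ∈ E, d < b) (y : ℝ) (hy : 0 < y) :
    kU b E y ≤ (b : ℝ) / E.card * y⁻¹ := by
  have hw := (kw_hasSum b hb E hE hEsub).mul_right y⁻¹
  refine hasSum_le (fun L => ?_) (kU_summable b hb E hE hEsub y hy).hasSum hw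
  rw [div_eq_mul_inv]
  have := (kw_pos b hb E L).le
  have := kp_nonneg b E L
  gcongr
  linarith

lemma le_kU (b : ℕ) (hb : 2 ≤ b) (E : Finset ℕ)
    (hE : E.Nonempty) (hEsub : ∀ d ∈ E, d < b) (y : ℝ) (hy : 0 < y) :
    (b : ℝ) / E.card * (y + 1)⁻¹ ≤ kU b E y := by
  have hw := (kw_hasSum b hb E hE hEsub).mul_right (y + 1)⁻¹
  refine hasSum_le (fun L => ?_) hw (kU_summable b hb E hE hEsub y hy).hasSum
  rw [div_eq_mul_inv]
  have := (kw_pos b hb E L).le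
  have := kp_nonneg b E L
  have := kp_lt_one b hb E L
  gcongr

/-- Splitting off the leading digit. -/
noncomputable def kSplit (b : ℕ) (E : Finset ℕ) :
    Unit ⊕ (kA b E × List (kA b E)) ≃ List (kA b E) :=
  Equiv.ofBijective (Sum.elim (fun _ => []) (fun q => q.2 ++ [q.1])) (by
    constructor
    · rintro (_ | ⟨a, L⟩) (_ | ⟨a', L'⟩) h
      · rfl
      · simp at h
      · simp at h
      · simp only [Sum.elim_inr] at h
        obtain ⟨h1, h2⟩ := List.append_inj' h rfl
        simp at h2
        simp [h1, h2]
    · intro L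
      rcases List.eq_nil_or_concat L with rfl | ⟨L', a, rfl⟩
      · exact ⟨Sum.inl (), rfl⟩
      · exact ⟨Sum.inr (a, L'), by simp⟩)

lemma kw_append (b : ℕ) (E : Finset ℕ) (L : List (kA b E)) (a : kA b E) :
    kw b E (L ++ [a]) = kw b E L / b := by
  simp [kw, pow_succ, div_eq_mul_inv, mul_comm]

lemma kp_append (b : ℕ) (hb : 2 ≤ b) (E : Finset ℕ) (L : List (kA b E)) (a : kA b E) :
    kp b E (L ++ [a]) = (((a : ℕ) : ℝ) + kp b E L) / b := by
  have hbpos : (0 : ℝ) < b := by exact_mod_cast (by omega : 0 < b)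
  simp only [kp, List.map_append, List.map_cons, List.map_nil, Nat.ofDigits_append,
    Nat.ofDigits_singleton, List.length_append, List.length_map, List.length_singleton]
  push_cast
  field_simp
  ring

lemma kU_rec (b : ℕ) (hb : 2 ≤ b) (E : Finset ℕ)
    (hE : E.Nonempty) (hEsub : ∀ d ∈ E, d < b) (y : ℝ) (hy : 0 < y) :
    kU b E y = y⁻¹ + ∑ a ∈ kA b E, kU b E (b * y + a) := by
  have hbpos : (0 : ℝ) < b := by exact_mod_cast (by omega : 0 < b)
  have hs := kU_summable b hb E hE hEsub y hy
  have hs' := hs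
  rw [← (kSplit b E).summable_iff] at hs'
  have h1 := hs'.comp_injective (Sum.inl_injective)
  have h2 := hs'.comp_injective (Sum.inr_injective)
  unfold kU
  rw [← (kSplit b E).tsum_eq, ← Finset.sum_coe_sort]
  have h3 : ∀ a : kA b E, HasSum (fun L => kw b E L / ((b * y + ((a : ℕ) : ℝ)) + kp b E L))
      (kU b E (b * y + ((a : ℕ) : ℝ))) := fun a =>
    (kU_summable b hb E hE hEsub _ (by positivity)).hasSum
  have key : ∀ a : kA b E, ∀ L, kw b E (L ++ [a]) / (y + kp b E (L ++ [a]))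
      = kw b E L / ((b * y + ((a : ℕ) : ℝ)) + kp b E L) := by
    intro a L
    rw [kw_append, kp_append b hb]
    have := kp_nonneg b E L
    field_simp
    ring
  have h4 := h2.hasSum.prod_fiberwise (g := fun a : kA b E => kU b E (b * y + ((a : ℕ) : ℝ)))
    (fun a => by
      refine (h3 a).congr_fun ?_
      intro L
      exact key a L)
  have h5 := h4.unique (hasSum_fintype _)
  have h6 := (HasSum.sum h1.hasSum h2.hasSum).tsum_eq
  rw [h5] at h6
  refine h6.trans ?_
  congr 1
  rw [tsum_fintype]
  rw [Fintype.sum_unique]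
  have h7 : kSplit b E (Sum.inl ()) = [] := rfl
  change kw b E (kSplit b E (Sum.inl ())) / (y + kp b E (kSplit b E (Sum.inl ()))) = y⁻¹
  rw [h7]
  simp [kw, kp]

lemma kempnerSum_eq (b : ℕ) (hb : 2 ≤ b) (E : Finset ℕ)
    (hE : E.Nonempty) (hEsub : ∀ d ∈ E, d < b) :
    kempnerSum b E = ∑ a ∈ (kA b E).filter (fun a => a ≠ 0), kU b E a := by
  have hbpos : (0 : ℝ) < b := by exact_mod_cast (by omega : 0 < b)
  let B := (kA b E).filter (fun a => a ≠ 0)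
  have hB : ∀ a : B, (a : ℕ) < b ∧ (a : ℕ) ∉ E ∧ (a : ℕ) ≠ 0 := by
    intro a
    have := a.2
    simp only [B, kA, Finset.mem_filter, Finset.mem_range] at this
    tauto
  have hL : ∀ L : List (kA b E), ∀ x ∈ L.map Subtype.val, x < b ∧ x ∉ E := by
    intro L x hx
    simp only [List.mem_map] at hx
    obtain ⟨a, _, rfl⟩ := hx
    have := a.2
    simpa [kA] using this
  let g : B × List (kA b E) → ℕ := fun q => Nat.ofDigits b (q.2.map Subtype.val ++ [(q.1 : ℕ)])
  have hdig : ∀ q, Nat.digits b (g q) = q.2.map Subtype.val ++ [(q.1 : ℕ)] := by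
    intro q
    apply Nat.digits_ofDigits b (by omega)
    · intro l hl
      rw [List.mem_append, List.mem_singleton] at hl
      rcases hl with hl | rfl
      · exact (hL _ _ hl).1
      · exact (hB _).1
    · intro h
      simpa using (hB q.1).2.2
  have hginj : Function.Injective g := by
    intro q q' h
    have h1 := hdig q
    rw [h, hdig q'] at h1
    obtain ⟨h2, h3⟩ := List.append_inj' h1 rfl
    simp at h3
    have h4 := (List.map_injective_iff.2 Subtype.val_injective) h2
    exact Prod.ext h3.symm h4.symm
  have hg0 : ∀ q, g q ≠ 0 := by
    intro q h
    have h1 := hdig q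
    rw [h] at h1
    simp at h1
  let f : ℕ → ℝ := fun n => if n ≠ 0 ∧ ∀ d ∈ Nat.digits b n, d ∉ E then (n : ℝ)⁻¹ else 0
  have hsupp : Function.support f ⊆ Set.range g := by
    intro n hn
    have hn' : n ≠ 0 ∧ ∀ d ∈ Nat.digits b n, d ∉ E := by
      by_contra hcon
      exact hn (if_neg hcon)
    obtain ⟨hn0, hnd⟩ := hn'
    have hne : Nat.digits b n ≠ [] := Nat.digits_ne_nil_iff_ne_zero.2 hn0
    have hlast := Nat.getLast_digit_ne_zero b hn0
    have hmem : ∀ d ∈ Nat.digits b n, d ∈ kA b E := by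
      intro d hd
      simp only [kA, Finset.mem_filter, Finset.mem_range]
      exact ⟨Nat.digits_lt_base (by omega) hd, hnd d hd⟩
    refine ⟨(⟨(Nat.digits b n).getLast hne, ?_⟩,
      (Nat.digits b n).dropLast.attach.map
        (fun x => ⟨x.1, hmem x.1 (List.mem_of_mem_dropLast x.2)⟩)), ?_⟩
    · simp only [B, Finset.mem_filter]
      exact ⟨hmem _ (List.getLast_mem hne), hlast⟩
    · simp only [g, List.map_map]
      have : (Nat.digits b n).dropLast.attach.map
        (Subtype.val ∘ fun x : {x // x ∈ (Nat.digits b n).dropLast} =>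
          (⟨x.1, hmem x.1 (List.mem_of_mem_dropLast x.2)⟩ : kA b E))
          = (Nat.digits b n).dropLast := by
        simp [Function.comp_def]
      rw [this, List.dropLast_append_getLast, Nat.ofDigits_digits]
  have hfg : ∀ q, f (g q) = kw b E q.2 / (((q.1 : ℕ) : ℝ) + kp b E q.2) := by
    intro q
    have hc : g q ≠ 0 ∧ ∀ d ∈ Nat.digits b (g q), d ∉ E := by
      refine ⟨hg0 q, ?_⟩
      intro d hd
      rw [hdig q, List.mem_append, List.mem_singleton] at hd
      rcases hd with hd | rfl
      · exact (hL _ _ hd).2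
      · exact (hB _).2.1
    simp only [f]
    rw [if_pos hc]
    simp only [g, Nat.ofDigits_append, Nat.ofDigits_singleton, List.length_map, kw, kp]
    push_cast
    field_simp
    ring
  have hK : kempnerSum b E = ∑' q, f (g q) := (hginj.tsum_eq hsupp).symm
  have hUs : ∀ a : B, HasSum (fun L => kw b E L / (((a : ℕ) : ℝ) + kp b E L))
      (kU b E ((a : ℕ) : ℝ)) := fun a =>
    (kU_summable b hb E hE hEsub _ (by
      have := (hB a).2.2
      exact_mod_cast Nat.pos_of_ne_zero this)).hasSum
  have hsum : Summable (fun q : B × List (kA b E) =>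
      kw b E q.2 / (((q.1 : ℕ) : ℝ) + kp b E q.2)) := by
    rw [summable_prod_of_nonneg]
    · exact ⟨fun a => (hUs a).summable, (hasSum_fintype _).summable⟩
    · intro q
      have := (kw_pos b hb E q.2).le
      have := kp_nonneg b E q.2
      simp only [Pi.zero_apply]
      positivity
  rw [hK, tsum_congr hfg]
  have h1 := hsum.hasSum.prod_fiberwise hUs
  rw [h1.unique (hasSum_fintype _)]
  exact Finset.sum_coe_sort B (fun a => kU b E (a : ℝ))

lemma hasSum_swap_aux {α β : Type*} {F : α × β → ℝ} {S : ℝ} (h : HasSum F S) :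
    HasSum (fun q : β × α => F (q.2, q.1)) S :=
  (Equiv.prodComm β α).hasSum_iff.2 h

set_option maxHeartbeats 1000000 in
lemma series_d (b : ℕ) (hb : 2 ≤ b) (E : Finset ℕ)
    (hE : E.Nonempty) (hEsub : ∀ d ∈ E, d < b) (d : ℕ) (hd : d < b) :
    ∃ S : ℝ, HasSum (fun m : ℕ => zetaVal (m + 2) * vMoment b E (m + 1) (d : ℝ) /
      (b : ℝ) ^ (m + 2)) S ∧
    HasSum (fun k : ℕ => kU b E ((b : ℝ) * (k + 1) - d) -
      (b : ℝ) / E.card * ((b : ℝ) * (k + 1))⁻¹) S := by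
  have hbpos : (0 : ℝ) < b := by exact_mod_cast (by omega : 0 < b)
  have hb2 : (2 : ℝ) ≤ b := by exact_mod_cast hb
  have hd1 : (d : ℝ) + 1 ≤ b := by exact_mod_cast hd
  have hd0 : (0 : ℝ) ≤ d := by positivity
  have hw := kw_hasSum b hb E hE hEsub
  let r : ℝ := (b - 1) / b
  have hr0 : 0 ≤ r := div_nonneg (by linarith) hbpos.le
  have hr1 : r < 1 := by rw [div_lt_one hbpos]; linarith
  have habs : ∀ L, |((d : ℝ) - kp b E L)| ≤ b - 1 := by
    intro L
    have h0 := kp_nonneg b E L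
    have h1 := kp_lt_one b hb E L
    rw [abs_le]
    constructor <;> linarith
  let F : ℕ × (ℕ × List (kA b E)) → ℝ := fun q =>
    ((((q.2.1 : ℝ) + 1) ^ (q.1 + 2))⁻¹ * (kw b E q.2.2 * ((d : ℝ) - kp b E q.2.2) ^ (q.1 + 1)))
      / (b : ℝ) ^ (q.1 + 2)
  have hz : ∀ m : ℕ, Summable (fun k : ℕ => (((k : ℝ) + 1) ^ (m + 2))⁻¹) := by
    intro m
    have h := (Real.summable_nat_pow_inv (p := m + 2)).2 (by omega)
    have h2 := (summable_nat_add_iff 1).2 h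
    refine h2.congr ?_
    intro k
    push_cast
    rfl
  have hFs : Summable F := by
    have hg : Summable (fun m : ℕ => r ^ m) := summable_geometric_of_lt_one hr0 hr1
    have h1 : Summable (fun q : ℕ × List (kA b E) => (((q.1 : ℝ) + 1) ^ 2)⁻¹ * kw b E q.2) :=
      (hz 0).mul_of_nonneg hw.summable (fun k => by simp only [Pi.zero_apply]; positivity)
        (fun L => (kw_pos b hb E L).le)
    have h2 := hg.mul_of_nonneg h1 (fun m => by simp only [Pi.zero_apply]; positivity)
      (fun q => by
        have := (kw_pos b hb E q.2).le
        simp only [Pi.zero_apply]; positivity)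
    refine Summable.of_norm_bounded h2 ?_
    rintro ⟨m, k, L⟩
    simp only [F]
    have hwL := (kw_pos b hb E L).le
    rw [norm_div, norm_mul, norm_mul, norm_pow, norm_inv, norm_pow, norm_pow,
      Real.norm_of_nonneg hwL, Real.norm_of_nonneg hbpos.le,
      Real.norm_of_nonneg (by positivity : (0 : ℝ) ≤ (k : ℝ) + 1), Real.norm_eq_abs]
    have e1 : |((d : ℝ) - kp b E L)| ^ (m + 1) ≤ (b - 1) ^ (m + 1) :=
      pow_le_pow_left₀ (abs_nonneg _) (habs L) _
    have e2 : (((k : ℝ) + 1) ^ (m + 2))⁻¹ ≤ (((k : ℝ) + 1) ^ 2)⁻¹ := by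
      apply inv_anti₀ (by positivity)
      apply pow_le_pow_right₀ _ (by omega)
      have : (0 : ℝ) ≤ k := by positivity
      linarith
    have e3 : (b - 1 : ℝ) ^ (m + 1) / (b : ℝ) ^ (m + 2) ≤ r ^ m := by
      simp only [r]
      rw [div_pow, div_le_div_iff₀ (by positivity) (by positivity)]
      have : (0 : ℝ) ≤ b - 1 := by linarith
      calc (b - 1 : ℝ) ^ (m + 1) * (b : ℝ) ^ m = (b - 1) ^ m * ((b - 1) * (b : ℝ) ^ m) := by ring
        _ ≤ (b - 1) ^ m * (b ^ 2 * (b : ℝ) ^ m) := by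
          gcongr
          nlinarith
        _ = _ := by ring
    calc (((k : ℝ) + 1) ^ (m + 2))⁻¹ * (kw b E L * |((d : ℝ) - kp b E L)| ^ (m + 1))
          / (b : ℝ) ^ (m + 2)
        ≤ (((k : ℝ) + 1) ^ 2)⁻¹ * (kw b E L * (b - 1) ^ (m + 1)) / (b : ℝ) ^ (m + 2) := by
          gcongr
      _ = ((b - 1 : ℝ) ^ (m + 1) / (b : ℝ) ^ (m + 2)) * ((((k : ℝ) + 1) ^ 2)⁻¹ * kw b E L) := by
          ring
      _ ≤ _ := by gcongr
  refine ⟨∑' q, F q, ?_, ?_⟩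
  · refine hFs.hasSum.prod_fiberwise ?_
    intro m
    have hv := vMoment_hasSum b hb E hE hEsub (m + 1) d
    have hs : Summable (fun q : ℕ × List (kA b E) => F (m, q)) :=
      hFs.comp_injective (Prod.mk_right_injective m)
    have h1 : HasSum (fun k : ℕ => (((k : ℝ) + 1) ^ (m + 2))⁻¹ * vMoment b E (m + 1) d /
        (b : ℝ) ^ (m + 2)) (∑' q, F (m, q)) := by
      refine hs.hasSum.prod_fiberwise ?_
      intro k
      exact (hv.mul_left _).div_const _
    have h2 : HasSum (fun k : ℕ => (((k : ℝ) + 1) ^ (m + 2))⁻¹ * vMoment b E (m + 1) d /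
        (b : ℝ) ^ (m + 2)) (zetaVal (m + 2) * vMoment b E (m + 1) (d : ℝ) /
      (b : ℝ) ^ (m + 2)) := by
      exact ((hz m).hasSum.mul_right _).div_const _
    rw [← h1.unique h2]
    exact hs.hasSum
  · have hsw : HasSum (fun q : (ℕ × List (kA b E)) × ℕ => F (q.2, q.1)) (∑' q, F q) :=
      hasSum_swap_aux hFs.hasSum
    have hgeo : ∀ q : ℕ × List (kA b E), HasSum (fun m => F (m, q))
        (kw b E q.2 / (((b : ℝ) * (q.1 + 1) - d) + kp b E q.2) -
          kw b E q.2 * ((b : ℝ) * (q.1 + 1))⁻¹) := by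
      rintro ⟨k, L⟩
      have hk : (0 : ℝ) ≤ k := by positivity
      have hB : (b : ℝ) ≤ b * (k + 1) := by nlinarith
      have hBpos : (0 : ℝ) < b * (k + 1) := by linarith
      have ha := habs L
      have hy : |((d : ℝ) - kp b E L) / (b * (k + 1))| < 1 := by
        rw [abs_div, abs_of_pos hBpos, div_lt_one hBpos]
        linarith
      have hne : ((b : ℝ) * (k + 1) - d) + kp b E L ≠ 0 := by
        have := (abs_le.1 ha).2
        linarith
      have h := (hasSum_geometric_of_abs_lt_one hy).mul_left
        (kw b E L * ((d : ℝ) - kp b E L) / (b * (k + 1)) ^ 2)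
      have e : kw b E L * ((d : ℝ) - kp b E L) / (b * (k + 1)) ^ 2 *
          (1 - ((d : ℝ) - kp b E L) / (b * (k + 1)))⁻¹ =
          kw b E L / (((b : ℝ) * (k + 1) - d) + kp b E L) -
          kw b E L * ((b : ℝ) * (k + 1))⁻¹ := by
        have e1 : (1 : ℝ) - ((d : ℝ) - kp b E L) / (b * (k + 1)) =
          (((b : ℝ) * (k + 1) - d) + kp b E L) / (b * (k + 1)) := by
          field_simp; ring
        rw [e1]
        generalize hX : (b : ℝ) * (k + 1) = X at *
        have hX0 : X ≠ 0 := hBpos.ne'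
        field_simp
        ring
      have hfun : ∀ m : ℕ, F (m, (k, L)) = kw b E L * ((d : ℝ) - kp b E L) / (b * (k + 1)) ^ 2 *
          (((d : ℝ) - kp b E L) / (b * (k + 1))) ^ m := by
        intro m
        simp only [F]
        generalize (d : ℝ) - kp b E L = z
        have hk1 : (k : ℝ) + 1 ≠ 0 := by positivity
        rw [div_pow, mul_pow, mul_pow]
        field_simp
        ring
      rw [e] at h
      rw [show (fun m => F (m, (k, L))) = _ from funext hfun]
      exact h
    have h1 := hsw.prod_fiberwise hgeo
    refine h1.prod_fiberwise ?_
    intro k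
    have hk : (0 : ℝ) ≤ k := by positivity
    have hB : (b : ℝ) ≤ b * (k + 1) := by nlinarith
    have hk1 : HasSum (fun L => kw b E L / (((b : ℝ) * (k + 1) - d) + kp b E L))
        (kU b E ((b : ℝ) * (k + 1) - d)) :=
      (kU_summable b hb E hE hEsub ((b : ℝ) * (k + 1) - d) (by linarith)).hasSum
    have hk2 := hw.mul_right ((b : ℝ) * (k + 1))⁻¹
    exact hk1.sub hk2

lemma sum_Eone (b : ℕ) (E : Finset ℕ) (hEsub : ∀ d ∈ E, d < b) (f : ℕ → ℝ) :
    ∑ a ∈ Eone b E, f a = ∑ a ∈ E, f a + (if 0 ∈ E then f b - f 0 else 0) := by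
  unfold Eone
  split_ifs with h
  · rw [Finset.sum_insert, ← Finset.add_sum_erase E f h]
    · ring
    · intro hb
      exact absurd (hEsub b (Finset.mem_of_mem_erase hb)) (lt_irrefl b)
  · simp

lemma sum_range_kA (b : ℕ) (E : Finset ℕ) (hEsub : ∀ d ∈ E, d < b) (f : ℕ → ℝ) :
    ∑ r ∈ Finset.range b, f r = ∑ a ∈ kA b E, f a + ∑ a ∈ E, f a := by
  have h : kA b E = Finset.range b \ E := by
    ext x; simp [kA]
  rw [h]
  exact (Finset.sum_sdiff (fun x hx => by simpa using hEsub x hx)).symm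

lemma finite_identity (b : ℕ) (hb : 2 ≤ b) (E : Finset ℕ)
    (hE : E.Nonempty) (hEsub : ∀ d ∈ E, d < b) (N : ℕ) :
    kempnerSum b E + ∑ k ∈ Finset.range (N + 1),
      ((∑ a ∈ Eone b E, kU b E ((b * k + a : ℕ) : ℝ)) - ((k : ℝ) + 1)⁻¹) =
    ∑ m ∈ Finset.Ico (N + 1) (b * (N + 1)), kU b E (m : ℝ) +
      (if 0 ∈ E then kU b E ((b * (N + 1) : ℕ) : ℝ) else 0) - ((N : ℝ) + 1)⁻¹ := by
  induction N with
  | zero =>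
    rw [kempnerSum_eq b hb E hE hEsub]
    simp only [zero_add, Finset.sum_range_one, mul_zero, mul_one, Nat.cast_zero]
    rw [sum_Eone b E hEsub (fun a => kU b E (a : ℝ))]
    have h1 := sum_range_kA b E hEsub (fun a => kU b E (a : ℝ))
    rw [Finset.range_eq_Ico, Finset.sum_eq_sum_Ico_succ_bot (by omega)] at h1
    have h2 : ∑ a ∈ (kA b E).filter (fun a => a ≠ 0), kU b E (a : ℝ) =
        ∑ a ∈ kA b E, kU b E (a : ℝ) - (if 0 ∈ E then 0 else kU b E ((0 : ℕ) : ℝ)) := by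
      rw [← Finset.sum_filter_add_sum_filter_not (kA b E) (fun a => a ≠ 0)]
      have h3 : (kA b E).filter (fun a => ¬ (a ≠ 0)) = if 0 ∈ E then ∅ else {0} := by
        ext x
        split_ifs with h
        · simp only [kA, Finset.mem_filter, Finset.mem_range, Finset.notMem_empty, iff_false]
          rintro ⟨⟨_, h5⟩, h6⟩
          push Not at h6
          subst h6
          exact h5 h
        · simp only [kA, Finset.mem_filter, Finset.mem_range, Finset.mem_singleton]
          constructor
          · rintro ⟨_, h6⟩
            push Not at h6
            exact h6
          · rintro rfl
            exact ⟨⟨by omega, h⟩, by simp⟩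
      rw [h3]
      split_ifs <;> simp
    rw [h2]
    simp only [zero_add, Nat.cast_zero] at h1 h2 ⊢
    split_ifs at * <;> linarith
  | succ N ih =>
    rw [Finset.sum_range_succ, ← add_assoc, ih]
    have hrec := kU_rec b hb E hE hEsub ((N + 1 : ℕ) : ℝ) (by positivity)
    have hE1 := sum_Eone b E hEsub (fun a => kU b E ((b * (N + 1) + a : ℕ) : ℝ))
    have hr := sum_range_kA b E hEsub (fun a => kU b E ((b * (N + 1) + a : ℕ) : ℝ))
    have hI : ∑ m ∈ Finset.Ico (N + 1) (b * (N + 1)), kU b E (m : ℝ) +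
        ∑ r ∈ Finset.range b, kU b E ((b * (N + 1) + r : ℕ) : ℝ) =
        kU b E ((N + 1 : ℕ) : ℝ) +
          ∑ m ∈ Finset.Ico (N + 1 + 1) (b * (N + 1 + 1)), kU b E (m : ℝ) := by
      have e1 : ∑ r ∈ Finset.range b, kU b E ((b * (N + 1) + r : ℕ) : ℝ) =
          ∑ m ∈ Finset.Ico (b * (N + 1)) (b * (N + 1 + 1)), kU b E (m : ℝ) := by
        rw [Finset.sum_Ico_eq_sum_range]
        congr 2
        rw [mul_add b (N + 1) 1]
        omega
      have l1 : N + 1 ≤ b * (N + 1) := Nat.le_mul_of_pos_left _ (by omega)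
      have l2 : b * (N + 1) ≤ b * (N + 1 + 1) := Nat.mul_le_mul_left _ (by omega)
      have l3 : 2 * (N + 1 + 1) ≤ b * (N + 1 + 1) := Nat.mul_le_mul_right _ hb
      rw [e1, Finset.sum_Ico_consecutive _ l1 l2,
        Finset.sum_eq_sum_Ico_succ_bot (by omega)]
    have hcast : ∀ a : ℕ, (b : ℝ) * ((N + 1 : ℕ) : ℝ) + a = ((b * (N + 1) + a : ℕ) : ℝ) := by
      intro a; push_cast; ring
    simp only [hcast] at hrec
    have hb1 : b * (N + 1 + 1) = b * (N + 1) + b := by ring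
    rw [hE1]
    simp only [hb1, add_zero] at *
    push_cast at *
    split_ifs at * <;> linarith

lemma tendsto_main (b : ℕ) (hb : 2 ≤ b) (E : Finset ℕ)
    (hE : E.Nonempty) (hEsub : ∀ d ∈ E, d < b) :
    Filter.Tendsto (fun N : ℕ => ∑ m ∈ Finset.Ico (N + 1) (b * (N + 1)), kU b E (m : ℝ) +
      (if 0 ∈ E then kU b E ((b * (N + 1) : ℕ) : ℝ) else 0) - ((N : ℝ) + 1)⁻¹)
      Filter.atTop (nhds ((b : ℝ) / E.card * Real.log b)) := by
  have hbpos : (0 : ℝ) < b := by exact_mod_cast (by omega : 0 < b)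
  have hb2 : (2 : ℝ) ≤ b := by exact_mod_cast hb
  set M : ℝ := (b : ℝ) / E.card with hM
  have hM0 : 0 ≤ M := by positivity
  have hinv : Filter.Tendsto (fun N : ℕ => ((N : ℝ) + 1)⁻¹) Filter.atTop (nhds 0) := by
    simpa [one_div] using tendsto_one_div_add_atTop_nhds_zero_nat (𝕜 := ℝ)
  have hMinv : Filter.Tendsto (fun N : ℕ => M * ((N : ℝ) + 1)⁻¹) Filter.atTop (nhds 0) := by
    simpa using hinv.const_mul M
  have h1 : Filter.Tendsto (fun N : ℕ => ∑ m ∈ Finset.Ico (N + 1) (b * (N + 1)), kU b E (m : ℝ))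
      Filter.atTop (nhds (M * Real.log b)) := by
    rw [tendsto_iff_norm_sub_tendsto_zero]
    refine squeeze_zero (fun N => norm_nonneg _) (fun N => ?_) hMinv
    have l1 : N + 1 ≤ b * (N + 1) := Nat.le_mul_of_pos_left _ (by omega)
    have hlog : M * Real.log b = ∑ m ∈ Finset.Ico (N + 1) (b * (N + 1)),
        (M * Real.log ((m + 1 : ℕ) : ℝ) - M * Real.log (m : ℝ)) := by
      rw [Finset.sum_Ico_sub (fun m : ℕ => M * Real.log (m : ℝ)) l1]
      push_cast
      rw [Real.log_mul hbpos.ne' (by positivity)]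
      ring
    have htel : ∑ m ∈ Finset.Ico (N + 1) (b * (N + 1)),
        (M * (m : ℝ)⁻¹ - M * ((m + 1 : ℕ) : ℝ)⁻¹) ≤ M * ((N : ℝ) + 1)⁻¹ := by
      have := Finset.sum_Ico_sub (fun m : ℕ => -(M * (m : ℝ)⁻¹)) l1
      have h2 : 0 ≤ M * ((b * (N + 1) : ℕ) : ℝ)⁻¹ := by positivity
      have h3 : ∑ m ∈ Finset.Ico (N + 1) (b * (N + 1)),
        (M * (m : ℝ)⁻¹ - M * ((m + 1 : ℕ) : ℝ)⁻¹) = ∑ m ∈ Finset.Ico (N + 1) (b * (N + 1)),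
        (-(M * ((m + 1 : ℕ) : ℝ)⁻¹) - -(M * (m : ℝ)⁻¹)) :=
        Finset.sum_congr rfl (fun m _ => by ring)
      rw [h3, this]
      push_cast at *
      linarith
    rw [hlog, ← Finset.sum_sub_distrib]
    refine (norm_sum_le _ _).trans (le_trans (Finset.sum_le_sum ?_) htel)
    intro m hm
    have hm1 : 1 ≤ m := by
      have := (Finset.mem_Ico.1 hm).1
      omega
    have hmpos : (0 : ℝ) < m := by exact_mod_cast hm1
    have u1 := kU_le b hb E hE hEsub m hmpos
    have u2 := le_kU b hb E hE hEsub m hmpos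
    rw [← hM] at u1 u2
    have v0 : Real.log ((m : ℝ) + 1) - Real.log m = Real.log (((m : ℝ) + 1) / m) :=
      (Real.log_div (by positivity) hmpos.ne').symm
    have v1 : Real.log (((m : ℝ) + 1) / m) ≤ (m : ℝ)⁻¹ := by
      refine (Real.log_le_sub_one_of_pos (by positivity)).trans (le_of_eq ?_)
      field_simp; ring
    have v2 : ((m : ℝ) + 1)⁻¹ ≤ Real.log (((m : ℝ) + 1) / m) := by
      refine le_trans (le_of_eq ?_) (Real.one_sub_inv_le_log_of_pos (by positivity))
      field_simp; ring
    rw [← v0] at v1 v2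
    have w1 := mul_le_mul_of_nonneg_left v1 hM0
    have w2 := mul_le_mul_of_nonneg_left v2 hM0
    rw [Real.norm_eq_abs, abs_le]
    push_cast
    constructor <;> linarith
  have h2 : Filter.Tendsto (fun N : ℕ => if 0 ∈ E then kU b E ((b * (N + 1) : ℕ) : ℝ) else 0)
      Filter.atTop (nhds 0) := by
    split_ifs
    · refine squeeze_zero (fun N => ?_) (fun N => ?_) hMinv
      · refine le_trans ?_ (le_kU b hb E hE hEsub _ (by push_cast; positivity))
        positivity
      · refine (kU_le b hb E hE hEsub _ (by push_cast; positivity)).trans ?_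
        rw [← hM]
        push_cast
        have : (0 : ℝ) ≤ N := by positivity
        gcongr
        nlinarith
    · exact tendsto_const_nhds
  simpa using (h1.add h2).sub hinv

theorem kempner_zeta_series (b : ℕ) (hb : 2 ≤ b) (E : Finset ℕ)
    (hE : E.Nonempty) (hEsub : ∀ d ∈ E, d < b) :
    Summable (fun m : ℕ =>
      zetaVal (m + 2) * (∑ d ∈ (Eone b E).image (fun a => b - a),
        vMoment b E (m + 1) (d : ℝ)) / (b : ℝ) ^ (m + 2)) ∧
    kempnerSum b E = ((b : ℝ) / E.card) * Real.log b -
      ∑' m : ℕ, zetaVal (m + 2) * (∑ d ∈ (Eone b E).image (fun a => b - a),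
        vMoment b E (m + 1) (d : ℝ)) / (b : ℝ) ^ (m + 2) := by
  have hbpos : (0 : ℝ) < b := by exact_mod_cast (by omega : 0 < b)
  have hcpos : (0 : ℝ) < E.card := by exact_mod_cast hE.card_pos
  have hE1le : ∀ a ∈ Eone b E, 1 ≤ a ∧ a ≤ b := by
    intro a ha
    unfold Eone at ha
    split_ifs at ha with h
    · rcases Finset.mem_insert.1 ha with rfl | ha
      · omega
      · have h1 := Finset.ne_of_mem_erase ha
        have h2 := hEsub a (Finset.mem_of_mem_erase ha)
        omega
    · have h2 := hEsub a ha
      have : a ≠ 0 := fun h0 => h (h0 ▸ ha)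
      omega
  have hinj : Set.InjOn (fun a => b - a) (Eone b E : Set ℕ) := by
    intro x hx y hy h
    have h1 := hE1le x hx
    have h2 := hE1le y hy
    simp only at h
    omega
  have hcard : ∑ a ∈ Eone b E, (1 : ℝ) = E.card := by
    rw [sum_Eone b E hEsub (fun _ => (1 : ℝ))]
    simp
  have hS : ∀ a : ℕ, ∃ S : ℝ, a ∈ Eone b E →
      HasSum (fun m : ℕ => zetaVal (m + 2) * vMoment b E (m + 1) ((b - a : ℕ) : ℝ) /
      (b : ℝ) ^ (m + 2)) S ∧
    HasSum (fun k : ℕ => kU b E ((b : ℝ) * (k + 1) - (b - a : ℕ)) -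
      (b : ℝ) / E.card * ((b : ℝ) * (k + 1))⁻¹) S := by
    intro a
    by_cases ha : a ∈ Eone b E
    · obtain ⟨S, hS⟩ := series_d b hb E hE hEsub (b - a) (by have := hE1le a ha; omega)
      exact ⟨S, fun _ => hS⟩
    · exact ⟨0, fun h => absurd h ha⟩
  choose S hS using hS
  have hsum1 := hasSum_sum (fun a ha => (hS a ha).1)
  have hsum2 := hasSum_sum (fun a ha => (hS a ha).2)
  have hterm : (fun m : ℕ =>
      zetaVal (m + 2) * (∑ d ∈ (Eone b E).image (fun a => b - a),
        vMoment b E (m + 1) (d : ℝ)) / (b : ℝ) ^ (m + 2)) = fun m : ℕ =>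
      ∑ a ∈ Eone b E, zetaVal (m + 2) * vMoment b E (m + 1) ((b - a : ℕ) : ℝ) /
      (b : ℝ) ^ (m + 2) := by
    funext m
    rw [Finset.sum_image hinj, Finset.mul_sum, Finset.sum_div]
  have hterm2 : (fun k : ℕ => ∑ a ∈ Eone b E, (kU b E ((b : ℝ) * (k + 1) - (b - a : ℕ)) -
      (b : ℝ) / E.card * ((b : ℝ) * (k + 1))⁻¹)) = fun k : ℕ =>
      (∑ a ∈ Eone b E, kU b E ((b * k + a : ℕ) : ℝ)) - ((k : ℝ) + 1)⁻¹ := by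
    funext k
    rw [Finset.sum_sub_distrib]
    congr 1
    · apply Finset.sum_congr rfl
      intro a ha
      rw [Nat.cast_sub (hE1le a ha).2]
      congr 1
      push_cast
      ring
    · have e : ∀ c : ℝ, ∑ a ∈ Eone b E, c = (∑ a ∈ Eone b E, (1 : ℝ)) * c := by
        intro c; rw [Finset.sum_mul]; simp only [one_mul]
      rw [e, hcard]
      rw [mul_inv, ← mul_assoc, ← mul_assoc, mul_div_cancel₀ _ hcpos.ne', mul_inv_cancel₀ hbpos.ne',
        one_mul]
  rw [hterm2] at hsum2
  rw [hterm]
  refine ⟨hsum1.summable, ?_⟩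
  rw [hsum1.tsum_eq]
  have ht := ((Filter.tendsto_add_atTop_iff_nat 1).2 hsum2.tendsto_sum_nat).const_add
    (kempnerSum b E)
  have ht2 := tendsto_main b hb E hE hEsub
  have ht3 := ht.congr (fun N => finite_identity b hb E hE hEsub N)
  have := tendsto_nhds_unique ht3 ht2
  linarith
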